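/- arXiv:2402.14620 — 2 statements merged into one kernel-verified Lean document; each statement's English description precedes it below -/
import Mathlib

section
/- Let r ≥ 2 be an integer and let ε ≥ 0 be a real. If Π = (A_1, …, A_r) is a partition of [n] into r parts with max_i |A_i| = n/r + εn, then the number of unordered pairs of vertices of [n] whose two elements lie in different parts of Π satisfies |ext(Π)| ≤ (1 − 1/r − rε²/(r−1))·C(n,2) + n/2. -/
open scoped Classical

noncomputable section

/-- The possible edges of a graph on vertex set `Fin n`. -/
abbrev EdgeType (n : ℕ) := {e : Sym2 (Fin n) // ¬ e.IsDiag}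

/-- `ext(Π)` for the partition of `Fin n` given by `φ`: the unordered pairs of distinct
vertices whose two elements lie in different parts. -/
def extPairs {n r : ℕ} (φ : Fin n → Fin r) : Finset (EdgeType n) :=
  Finset.univ.filter fun e => ¬ (Sym2.map φ (e : Sym2 (Fin n))).IsDiag

lemma ext_two_mul {n r : ℕ} (φ : Fin n → Fin r) :
    2 * (extPairs φ).card + ∑ i : Fin r, (Finset.univ.filter fun v : Fin n => φ v = i).card ^ 2
      = n ^ 2 := by
  have h1 : (extPairs φ).card = (SimpleGraph.comap φ ⊤).edgeFinset.card := by
    rw [← Finset.card_map (Function.Embedding.subtype _)]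
    congr 1
    ext e
    induction e using Sym2.ind with
    | _ x y =>
      simp [extPairs]
      intro h h2
      exact h (by rw [h2])
  have h2 := (SimpleGraph.comap φ (⊤ : SimpleGraph (Fin r))).two_mul_card_edgeFinset
  have h3 : ∑ i : Fin r, (Finset.univ.filter fun v : Fin n => φ v = i).card ^ 2
      = (Finset.univ.filter fun p : Fin n × Fin n => φ p.1 = φ p.2).card := by
    rw [Finset.card_eq_sum_card_fiberwise (f := fun p => φ p.1) (t := Finset.univ) (by simp)]
    refine Finset.sum_congr rfl fun i _ => ?_
    rw [sq, ← Finset.card_product]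
    congr 1
    ext ⟨x, y⟩
    simp only [Finset.mem_product, Finset.mem_filter, Finset.mem_univ, true_and]
    grind
  have h4 := Finset.card_filter_add_card_filter_not (s := (Finset.univ : Finset (Fin n × Fin n)))
    (fun p => φ p.1 = φ p.2)
  rw [h1, h2, h3]
  simp only [Finset.card_univ, Fintype.card_prod, Fintype.card_fin] at h4
  rw [sq, ← h4, add_comm]
  congr 2

/-- If `Π` is a partition of `[n]` into `r` parts with largest part of size `n/r + εn`, then
`|ext(Π)| ≤ (1 - 1/r - rε²/(r-1)) C(n,2) + n/2`. -/
theorem ext_card_unbalanced_cut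
    (n r : ℕ) (hr : 2 ≤ r) (ε : ℝ) (hε : 0 ≤ ε) (φ : Fin n → Fin r)
    (hmax : ∀ i : Fin r,
      ((Finset.univ.filter fun v : Fin n => φ v = i).card : ℝ) ≤ (n : ℝ) / r + ε * n)
    (hattain : ∃ i : Fin r,
      ((Finset.univ.filter fun v : Fin n => φ v = i).card : ℝ) = (n : ℝ) / r + ε * n) :
    ((extPairs φ).card : ℝ) ≤
      (1 - 1 / r - r * ε ^ 2 / (r - 1)) * (n.choose 2 : ℝ) + (n : ℝ) / 2 := by
  obtain ⟨i, hi⟩ := hattain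
  have h := ext_two_mul φ
  have hs : ∑ i : Fin r, (Finset.univ.filter fun v : Fin n => φ v = i).card = n := by
    rw [← Finset.card_eq_sum_card_fiberwise (by simp)]
    simp
  set a : Fin r → ℕ := fun i => (Finset.univ.filter fun v : Fin n => φ v = i).card with ha
  have h' : 2 * ((extPairs φ).card : ℝ) + ∑ i, (a i : ℝ) ^ 2 = (n : ℝ) ^ 2 := by exact_mod_cast h
  have hs' : ∑ i, (a i : ℝ) = n := by exact_mod_cast hs
  have hi' : (a i : ℝ) = n / r + ε * n := hi
  rw [← Finset.add_sum_erase _ _ (Finset.mem_univ i)] at h' hs'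
  have hcs := sq_sum_le_card_mul_sum_sq (s := Finset.univ.erase i) (f := fun j => (a j : ℝ))
  have hr2 : (2 : ℝ) ≤ r := by exact_mod_cast hr
  rw [Finset.card_erase_of_mem (Finset.mem_univ i), Finset.card_univ, Fintype.card_fin,
    Nat.cast_sub (by omega), Nat.cast_one] at hcs
  set S := ∑ j ∈ Finset.univ.erase i, (a j : ℝ)
  set Q := ∑ j ∈ Finset.univ.erase i, (a j : ℝ) ^ 2
  have hr1 : (0 : ℝ) < r - 1 := by linarith
  have hr0 : (0 : ℝ) < r := by linarith
  have hS : S = n - (n / r + ε * n) := by linarith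
  have hQ : S ^ 2 / (r - 1) ≤ Q := by
    rw [div_le_iff₀ hr1]; linarith
  have key : (n / r + ε * n : ℝ) ^ 2 + S ^ 2 / (r - 1)
      = (1 / r + r * ε ^ 2 / (r - 1)) * (n : ℝ) ^ 2 := by
    rw [hS]; field_simp; ring
  rw [hi'] at h'
  have hc : 0 ≤ (1 / r + r * ε ^ 2 / (r - 1) : ℝ) := by positivity
  rw [Nat.cast_choose_two]
  have hn : (0 : ℝ) ≤ n := by positivity
  nlinarith [mul_nonneg hc hn]

end
end

section
/- Let G be a k-uniform hypergraph on a finite vertex set V, let t be a nonnegative integer, and let M := {R ⊆ V : G[R] is a matching with at most t edges}. Let p ∈ (0,1), let R ~ V_p be a p-random subset of V, and let R* := R ∖ ⋃G[R] (R with all vertices covered by edges of G inside R removed). Let A be any family of independent sets of G, let A : A → P(V) be any function, define q ∈ (0,1) by q/(1−q) = (p/(1−p))^k, and set a := max{|G[A(R*)]| : R* ∈ A}. Then Pr(R ∈ M and R* ∈ A and G[A(R*) ∩ R] = ∅) ≥ (1−q)^a · Pr(R ∈ M and R* ∈ A). -/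
open scoped Classical

noncomputable section

/-- Probability that the `p`-random subset of a finite type `V` (each element retained
independently with probability `p`) satisfies `A`. -/
def prSub (V : Type*) [Fintype V] (p : ℝ) (A : Finset V → Prop) : ℝ :=
  ∑ R ∈ Finset.univ.filter fun R : Finset V => A R,
    p ^ R.card * (1 - p) ^ (Fintype.card V - R.card)

/-- The subhypergraph of `G` induced by `R`: the edges of `G` entirely contained in `R`. -/
def inducedEdges {V : Type*} (G : Finset (Finset V)) (R : Finset V) : Finset (Finset V) :=
  G.filter fun e => e ⊆ R

/-- `R ∈ M`: the edges of `G` contained in `R` form a matching with at most `t` edges. -/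
def InM {V : Type*} (G : Finset (Finset V)) (t : ℕ) (R : Finset V) : Prop :=
  (∀ e ∈ inducedEdges G R, ∀ f ∈ inducedEdges G R, e ≠ f → Disjoint e f) ∧
    (inducedEdges G R).card ≤ t

/-- `R* = R ∖ ⋃ G[R]`. -/
def Rstar {V : Type*} [DecidableEq V] (G : Finset (Finset V)) (R : Finset V) : Finset V :=
  R \ (inducedEdges G R).sup id

theorem mr_edges {V : Type} [DecidableEq V] (G : Finset (Finset V))
    (hne : ∀ e ∈ G, e.Nonempty) (R : Finset V)
    (hM : ∀ e ∈ inducedEdges G R, ∀ f ∈ inducedEdges G R, e ≠ f → Disjoint e f)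
    (C : Finset (Finset V)) (hC : C ⊆ inducedEdges G R) :
    inducedEdges G (R \ C.sup id) = inducedEdges G R \ C := by
  ext e
  constructor
  · intro he
    simp only [inducedEdges, Finset.mem_filter] at he
    have heR : e ∈ inducedEdges G R := by
      simp only [inducedEdges, Finset.mem_filter]
      exact ⟨he.1, he.2.trans Finset.sdiff_subset⟩
    refine Finset.mem_sdiff.2 ⟨heR, fun heC => ?_⟩
    obtain ⟨x, hx⟩ := hne e he.1
    exact (Finset.mem_sdiff.1 (he.2 hx)).2 (Finset.mem_sup.2 ⟨e, heC, hx⟩)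
  · intro he
    obtain ⟨heR, heC⟩ := Finset.mem_sdiff.1 he
    have h := heR
    simp only [inducedEdges, Finset.mem_filter] at h ⊢
    refine ⟨h.1, fun x hx => Finset.mem_sdiff.2 ⟨h.2 hx, fun hxs => ?_⟩⟩
    obtain ⟨f, hf, hxf⟩ := Finset.mem_sup.1 hxs
    have hef : e ≠ f := fun h => heC (h ▸ hf)
    exact Finset.disjoint_left.1 (hM e heR f (hC hf) hef) hx hxf

theorem mr_sup_sub {V : Type} [DecidableEq V] (G : Finset (Finset V)) (R : Finset V)
    (C : Finset (Finset V)) (hC : C ⊆ inducedEdges G R) : C.sup id ⊆ R := by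
  intro x hx
  obtain ⟨f, hf, hxf⟩ := Finset.mem_sup.1 hx
  have h := hC hf
  simp only [inducedEdges, Finset.mem_filter] at h
  exact h.2 hxf

theorem mr_star {V : Type} [DecidableEq V] (G : Finset (Finset V))
    (hne : ∀ e ∈ G, e.Nonempty) (R : Finset V)
    (hM : ∀ e ∈ inducedEdges G R, ∀ f ∈ inducedEdges G R, e ≠ f → Disjoint e f)
    (C : Finset (Finset V)) (hC : C ⊆ inducedEdges G R) :
    Rstar G (R \ C.sup id) = Rstar G R := by
  unfold Rstar
  rw [mr_edges G hne R hM C hC, sdiff_sdiff_left]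
  congr 1
  rw [← Finset.sup_union, Finset.union_sdiff_of_subset hC]

theorem mr_card {V : Type} [DecidableEq V] (k : ℕ) (G : Finset (Finset V))
    (hG : ∀ e ∈ G, e.card = k) (R : Finset V)
    (hM : ∀ e ∈ inducedEdges G R, ∀ f ∈ inducedEdges G R, e ≠ f → Disjoint e f)
    (C : Finset (Finset V)) (hC : C ⊆ inducedEdges G R) :
    (R \ C.sup id).card + k * C.card = R.card := by
  have h1 : (C.sup id).card = k * C.card := by
    rw [Finset.sup_eq_biUnion, Finset.card_biUnion (t := id) (fun e he f hf h => hM e (hC he) f (hC hf) h)]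
    rw [Finset.sum_congr rfl (g := fun _ => k), Finset.sum_const, smul_eq_mul, mul_comm]
    intro e he
    have h := hC he
    simp only [inducedEdges, Finset.mem_filter] at h
    exact hG e h.1
  rw [← h1]
  exact Finset.card_sdiff_add_card_eq_card (mr_sup_sub G R C hC)

theorem mr_weight (p : ℝ) (hp : p ∈ Set.Ioo (0 : ℝ) 1) (n r r' k c : ℕ) (h : r' + k * c = r)
    (hr : r ≤ n) :
    p ^ r * (1 - p) ^ (n - r) = p ^ r' * (1 - p) ^ (n - r') * ((p / (1 - p)) ^ k) ^ c := by
  have h1 : (1 - p) ≠ 0 := by linarith [hp.2]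
  have h2 : n - r' = (n - r) + k * c := by omega
  rw [h2, ← h, ← pow_mul, div_pow, pow_add, pow_add]
  field_simp

/-- The resampling lemma: if `G` is a `k`-uniform hypergraph on `V`, `𝒜` is a family of
independent sets of `G`, `A : 𝒜 → P(V)`, `q/(1-q) = (p/(1-p))^k` and
`a = max{|G[A(R*)]| : R* ∈ 𝒜}`, then
`Pr(R ∈ M ∧ R* ∈ 𝒜 ∧ G[A(R*) ∩ R] = ∅) ≥ (1-q)^a Pr(R ∈ M ∧ R* ∈ 𝒜)`. -/
theorem matching_resample
    {V : Type} [Fintype V] [DecidableEq V] (k : ℕ) (G : Finset (Finset V))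
    (hG : ∀ e ∈ G, e.card = k) (t : ℕ)
    (p : ℝ) (hp : p ∈ Set.Ioo (0 : ℝ) 1)
    (𝒜 : Finset V → Prop) (h𝒜 : ∀ R', 𝒜 R' → ∀ e ∈ G, ¬ e ⊆ R')
    (A : Finset V → Finset V)
    (q : ℝ) (hq : q ∈ Set.Ioo (0 : ℝ) 1) (hqk : q / (1 - q) = (p / (1 - p)) ^ k) :
    (1 - q) ^
        ((Finset.univ.filter fun R' : Finset V => 𝒜 R').sup
          fun R' => (inducedEdges G (A R')).card) *
        prSub V p (fun R => InM G t R ∧ 𝒜 (Rstar G R)) ≤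
      prSub V p (fun R =>
        InM G t R ∧ 𝒜 (Rstar G R) ∧ inducedEdges G (A (Rstar G R) ∩ R) = ∅) := by
  by_cases hne : ∀ e ∈ G, e.Nonempty
  swap
  · push Not at hne
    obtain ⟨e, he, h0⟩ := hne
    have hA0 : ∀ R', ¬ 𝒜 R' := fun R' h => h𝒜 R' h e he (by
      rw [h0]; exact Finset.empty_subset _)
    simp [prSub, hA0]
  set a := (Finset.univ.filter fun R' : Finset V => 𝒜 R').sup
          fun R' => (inducedEdges G (A R')).card with ha
  have hq1 : 0 < 1 - q := by linarith [hq.2]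
  have hp1 : 0 < 1 - p := by linarith [hp.2]
  have hp0 : 0 < p := hp.1
  set l := (p / (1 - p)) ^ k with hl
  have hl0 : 0 ≤ l := by positivity
  have hl1 : 1 + l = (1 - q)⁻¹ := by
    rw [← hqk]; field_simp; ring
  set w : Finset V → ℝ := fun R => p ^ R.card * (1 - p) ^ (Fintype.card V - R.card) with hw
  have hw0 : ∀ R, 0 ≤ w R := fun R => by simp only [hw]; positivity
  let B : Finset V → Finset (Finset V) := fun R => inducedEdges G (A (Rstar G R))
  let C : Finset V → Finset (Finset V) := fun R => inducedEdges G R ∩ B R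
  have hC : ∀ R, C R ⊆ inducedEdges G R := fun R => Finset.inter_subset_left
  let φ : Finset V → Finset V := fun R => R \ (C R).sup id
  let S1 := Finset.univ.filter fun R : Finset V => InM G t R ∧ 𝒜 (Rstar G R)
  let S2 := Finset.univ.filter fun R : Finset V =>
    InM G t R ∧ 𝒜 (Rstar G R) ∧ inducedEdges G (A (Rstar G R) ∩ R) = ∅
  have hkey : ∑ R ∈ S1, w R ≤ ∑ R ∈ S2, (1 + l) ^ a * w R := by
    calc ∑ R ∈ S1, w R = ∑ R ∈ S1, w (φ R) * l ^ (C R).card := by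
          refine Finset.sum_congr rfl fun R hR => ?_
          have hR' := (Finset.mem_filter.1 hR).2
          exact mr_weight p hp _ _ _ k _ (mr_card k G hG R hR'.1.1 (C R) (hC R))
            (Finset.card_le_univ R)
      _ = ∑ x ∈ S1.image (fun R => (⟨φ R, C R⟩ : (_ : Finset V) × Finset (Finset V))),
            w x.1 * l ^ x.2.card := by
          rw [Finset.sum_image]
          intro R hR R' hR' h
          simp only [Sigma.mk.injEq, heq_eq_eq] at h
          have e1 : φ R ∪ (C R).sup id = R :=
            Finset.sdiff_union_of_subset (mr_sup_sub G R _ (hC R))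
          have e2 : φ R' ∪ (C R').sup id = R' :=
            Finset.sdiff_union_of_subset (mr_sup_sub G R' _ (hC R'))
          rw [← e1, ← e2, h.1, h.2]
      _ ≤ ∑ x ∈ S2.sigma (fun R => (B R).powerset), w x.1 * l ^ x.2.card := by
          refine Finset.sum_le_sum_of_subset_of_nonneg ?_ ?_
          · intro x hx
            obtain ⟨R, hR, rfl⟩ := Finset.mem_image.1 hx
            have hR' := (Finset.mem_filter.1 hR).2
            have hs : Rstar G (φ R) = Rstar G R := mr_star G hne R hR'.1.1 _ (hC R)
            have he : inducedEdges G (φ R) = inducedEdges G R \ C R :=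
              mr_edges G hne R hR'.1.1 _ (hC R)
            refine Finset.mem_sigma.2 ⟨Finset.mem_filter.2 ⟨Finset.mem_univ _, ⟨?_, ?_⟩, ?_, ?_⟩, ?_⟩
            · intro e h1 f h2
              rw [he] at h1 h2
              exact hR'.1.1 e (Finset.mem_sdiff.1 h1).1 f (Finset.mem_sdiff.1 h2).1
            · rw [he]
              exact (Finset.card_le_card Finset.sdiff_subset).trans hR'.1.2
            · rw [hs]; exact hR'.2
            · simp only [hs]
              refine Finset.eq_empty_of_forall_notMem fun e hee => ?_
              simp only [inducedEdges, Finset.mem_filter] at hee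
              have h1 : e ∈ inducedEdges G (φ R) := by
                simp only [inducedEdges, Finset.mem_filter]
                exact ⟨hee.1, hee.2.trans Finset.inter_subset_right⟩
              rw [he] at h1
              obtain ⟨h2, h3⟩ := Finset.mem_sdiff.1 h1
              refine h3 (Finset.mem_inter.2 ⟨h2, ?_⟩)
              simp only [B, inducedEdges, Finset.mem_filter]
              exact ⟨hee.1, hee.2.trans Finset.inter_subset_left⟩
            · rw [Finset.mem_powerset]
              simp only [B, hs]
              exact Finset.inter_subset_right
          · intro x _ _
            exact mul_nonneg (hw0 _) (pow_nonneg hl0 _)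
      _ = ∑ R ∈ S2, (1 + l) ^ (B R).card * w R := by
          rw [Finset.sum_sigma]
          refine Finset.sum_congr rfl fun R _ => ?_
          simp only
          rw [← Finset.mul_sum, mul_comm]
          congr 1
          have := Finset.sum_pow_mul_eq_add_pow l 1 (B R)
          simp only [one_pow, mul_one] at this
          rw [this, add_comm]
      _ ≤ ∑ R ∈ S2, (1 + l) ^ a * w R := by
          refine Finset.sum_le_sum fun R hR => ?_
          have hR' := (Finset.mem_filter.1 hR).2
          refine mul_le_mul_of_nonneg_right (pow_le_pow_right₀ (by linarith) ?_) (hw0 R)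
          exact Finset.le_sup (f := fun R' => (inducedEdges G (A R')).card)
            (Finset.mem_filter.2 ⟨Finset.mem_univ _, hR'.2.1⟩)
  rw [← Finset.mul_sum, hl1] at hkey
  have hS1 : prSub V p (fun R => InM G t R ∧ 𝒜 (Rstar G R)) = ∑ R ∈ S1, w R := by
    unfold prSub
    refine Finset.sum_congr ?_ fun _ _ => rfl
    ext R
    simp [S1]
  have hS2 : prSub V p (fun R => InM G t R ∧ 𝒜 (Rstar G R) ∧
      inducedEdges G (A (Rstar G R) ∩ R) = ∅) = ∑ R ∈ S2, w R := by
    unfold prSub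
    refine Finset.sum_congr ?_ fun _ _ => rfl
    ext R
    simp [S2]
  rw [hS1, hS2]
  calc (1 - q) ^ a * ∑ R ∈ S1, w R
      ≤ (1 - q) ^ a * ((1 - q)⁻¹ ^ a * ∑ R ∈ S2, w R) :=
        mul_le_mul_of_nonneg_left hkey (by positivity)
    _ = ∑ R ∈ S2, w R := by
        rw [← mul_assoc, ← mul_pow, mul_inv_cancel₀ hq1.ne', one_pow, one_mul]

end
end
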